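/- Fix an integer K ≥ 0 and 0 < η ≤ 1/2. Consider the additive Gaussian model Y = X + σZ with η = σ²/2 and cumulative distribution functions F, G of X, Y. Assume F is (2K+2)-times continuously differentiable with sup_{y∈ℝ} |F^{(k)}(y)| ≤ L for all k ≤ 2K+2. Then there exists a constant C depending only on L and K such that for all y ∈ ℝ, | F(y) − Σ_{l=0}^{K} (−1)^l (η^l/l!) G^{(2l)}(y) | ≤ C · η^{K+1}. -/

import Mathlib

open MeasureTheory ProbabilityTheory Filter

/-!
Let `P_t` be the heat semigroup, `P_t f (y) = 𝔼 f (y - √(2t) Z)` with `Z` standard Gaussian, so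
that `G = P_η F`. By Stein's identity, `t ↦ P_t f (y)` has `l`-th derivative `P_t f⁽²ˡ⁾ (y)`; hence
the sum over `l` is the Taylor polynomial of `t ↦ P_t F (y)` centred at `t = η` and evaluated at
`t = 0`, where the curve takes the value `F y`. Its remainder is at most
`sup |F⁽²ᴷ⁺²⁾| η ^ (K + 1) / (K + 1)!`. Time is parametrised by `s` with `t = s ^ 2 / 2`, because
`√(2t)` is not differentiable at `t = 0`; a derivative in `t` then becomes a derivative in `s`
divided by `s`.
-/

section Stein

variable {E : Type*} [NormedAddCommGroup E] [NormedSpace ℝ E] {m : ℝ} {v : NNReal} {f : ℝ → E}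

lemma hasDerivAt_gaussianPDFReal (m : ℝ) (v : NNReal) (x : ℝ) :
    HasDerivAt (gaussianPDFReal m v) (-((x - m) / v * gaussianPDFReal m v x)) x := by
  have hexponent : HasDerivAt (fun x : ℝ ↦ -(x - m) ^ 2 / (2 * v)) (-((x - m) / v)) x := by
    convert! ((((hasDerivAt_id x).sub_const m).pow 2).neg).div_const (2 * (v : ℝ)) using 1
    simp only [id]
    ring
  rw [gaussianPDFReal_def]
  convert! hexponent.exp.const_mul (√(2 * Real.pi * v))⁻¹ using 1
  ring

lemma integrable_gaussianReal_iff (hv : v ≠ 0) :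
    Integrable f (gaussianReal m v) ↔ Integrable (fun x ↦ gaussianPDFReal m v x • f x) := by
  rw [gaussianReal_of_var_ne_zero m hv, integrable_withDensity_iff_integrable_smul'
    (measurable_gaussianPDF m v) (ae_of_all _ fun _ ↦ gaussianPDF_lt_top)]
  simp only [toReal_gaussianPDF]

lemma stein_identity_gaussianReal {f' : ℝ → E} (hderiv : ∀ x, HasDerivAt f (f' x) x)
    (hf : Integrable f (gaussianReal m v)) (hf' : Integrable f' (gaussianReal m v))
    (hxf : Integrable (fun x ↦ (x - m) • f x) (gaussianReal m v)) :
    ∫ x, (x - m) • f x ∂gaussianReal m v = (v : ℝ) • ∫ x, f' x ∂gaussianReal m v := by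
  by_cases hE : CompleteSpace E; swap
  · simp [integral, hE]
  rcases eq_or_ne v 0 with rfl | hv
  · simp
  rw [integrable_gaussianReal_iff hv] at hf hf' hxf
  have hv' : (v : ℝ) ≠ 0 := by exact_mod_cast hv
  have hprod (x : ℝ) : HasDerivAt (fun x ↦ (v : ℝ) • gaussianPDFReal m v x • f x)
      ((v : ℝ) • gaussianPDFReal m v x • f' x - gaussianPDFReal m v x • (x - m) • f x) x := by
    convert! ((hasDerivAt_gaussianPDFReal m v x).smul (hderiv x)).const_smul (v : ℝ) using 1
    match_scalars <;> field_simp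
  have hzero := integral_eq_zero_of_hasDerivAt_of_integrable hprod
    ((hf'.smul (v : ℝ)).sub hxf) (hf.smul (v : ℝ))
  have hsub := integral_sub (hf'.smul (v : ℝ)) hxf
  simp only [Pi.smul_apply] at hsub
  rw [hsub, integral_smul, sub_eq_zero] at hzero
  rw [integral_gaussianReal_eq_integral_smul hv, integral_gaussianReal_eq_integral_smul hv, hzero]

end Stein

section GaussianSmoothing

lemma integrable_id_gaussianReal (m : ℝ) (v : NNReal) :
    Integrable (fun x ↦ x) (gaussianReal m v) :=
  (memLp_id_gaussianReal 1).integrable le_rfl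

lemma integrable_comp_sub_mul {E : Type*} [NormedAddCommGroup E] {μ : Measure ℝ}
    [IsFiniteMeasure μ] {f : ℝ → E} (hf : StronglyMeasurable f) (hbdd : ∃ C, ∀ x, ‖f x‖ ≤ C)
    (s y : ℝ) : Integrable (fun z ↦ f (y - s * z)) μ := by
  obtain ⟨C, hC⟩ := hbdd
  exact Integrable.of_bound (hf.comp_measurable (by fun_prop)).aestronglyMeasurable C
    (ae_of_all _ fun z ↦ hC _)

variable {E : Type*} [NormedAddCommGroup E] [NormedSpace ℝ E] {f : ℝ → E}

/-- The heat flow `P_t f (y)` at time `t = s ^ 2 / 2`, as a Gaussian average of `f` around `y`; the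
parameter `s` may have either sign. -/
noncomputable def gaussianSmoothing (f : ℝ → E) (s y : ℝ) : E :=
  ∫ z, f (y - s * z) ∂gaussianReal 0 1

lemma norm_gaussianSmoothing_le {C : ℝ} (hC : ∀ x, ‖f x‖ ≤ C) (s y : ℝ) :
    ‖gaussianSmoothing f s y‖ ≤ C := by
  simpa [gaussianSmoothing] using norm_integral_le_of_norm_le_const
    (μ := gaussianReal 0 1) (ae_of_all _ fun z ↦ hC (y - s * z))

lemma hasDerivAt_comp_sub_mul {s y z : ℝ} (hf : DifferentiableAt ℝ f (y - s * z)) :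
    HasDerivAt (fun z ↦ f (y - s * z)) (-(s • deriv f (y - s * z))) z := by
  have hinner : HasDerivAt (fun z ↦ y - s * z) (-s) z := by
    simpa using ((hasDerivAt_id z).const_mul s).const_sub y
  simpa only [neg_smul, Function.comp_def] using hf.hasDerivAt.scomp z hinner

variable [CompleteSpace E]

@[simp]
lemma gaussianSmoothing_zero (f : ℝ → E) (y : ℝ) : gaussianSmoothing f 0 y = f y := by
  simp [gaussianSmoothing]

lemma hasDerivAt_gaussianSmoothing (hf : Differentiable ℝ f) (hbdd : ∃ C, ∀ x, ‖f x‖ ≤ C)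
    (hbdd' : ∃ C, ∀ x, ‖deriv f x‖ ≤ C) (s y : ℝ) :
    HasDerivAt (gaussianSmoothing f s) (gaussianSmoothing (deriv f) s y) y := by
  have hint (x : ℝ) : Integrable (fun z ↦ f (x - s * z)) (gaussianReal 0 1) :=
    integrable_comp_sub_mul hf.continuous.stronglyMeasurable hbdd s x
  have hint' : Integrable (fun z ↦ deriv f (y - s * z)) (gaussianReal 0 1) :=
    integrable_comp_sub_mul (stronglyMeasurable_deriv f) hbdd' s y
  obtain ⟨C, hC⟩ := hbdd'
  exact (hasDerivAt_integral_of_dominated_loc_of_deriv_le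
    (F := fun x z ↦ f (x - s * z)) (F' := fun x z ↦ deriv f (x - s * z)) (bound := fun _ ↦ C)
    univ_mem (Eventually.of_forall fun x ↦ (hint x).aestronglyMeasurable) (hint y)
    hint'.aestronglyMeasurable (ae_of_all _ fun z x _ ↦ hC _) (integrable_const C)
    (ae_of_all _ fun z x _ ↦ (hf _).hasDerivAt.comp_sub_const x (s * z))).2

lemma iteratedDeriv_gaussianSmoothing {n : ℕ}
    (hf : ∀ k < n, Differentiable ℝ (iteratedDeriv k f))
    (hbdd : ∀ k ≤ n, ∃ C, ∀ x, ‖iteratedDeriv k f x‖ ≤ C) (s : ℝ) :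
    iteratedDeriv n (gaussianSmoothing f s) = gaussianSmoothing (iteratedDeriv n f) s := by
  induction n with
  | zero => simp only [iteratedDeriv_zero]
  | succ n ih =>
    ext y
    rw [iteratedDeriv_succ, ih (fun k hk ↦ hf k (by lia)) (fun k hk ↦ hbdd k (by lia)),
      iteratedDeriv_succ]
    refine (hasDerivAt_gaussianSmoothing (hf n n.lt_succ_self) (hbdd n n.le_succ) ?_ s y).deriv
    simpa only [← iteratedDeriv_succ] using hbdd (n + 1) le_rfl

lemma integral_smul_comp_sub_mul_gaussianReal (hf : Differentiable ℝ f)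
    (hbdd : ∃ C, ∀ x, ‖f x‖ ≤ C) (hbdd' : ∃ C, ∀ x, ‖deriv f x‖ ≤ C) (s y : ℝ) :
    ∫ z, z • f (y - s * z) ∂gaussianReal 0 1 = -(s • gaussianSmoothing (deriv f) s y) := by
  have hint : Integrable (fun z ↦ f (y - s * z)) (gaussianReal 0 1) :=
    integrable_comp_sub_mul hf.continuous.stronglyMeasurable hbdd s y
  have hint' : Integrable (fun z ↦ -(s • deriv f (y - s * z))) (gaussianReal 0 1) :=
    ((integrable_comp_sub_mul (stronglyMeasurable_deriv f) hbdd' s y).smul s).neg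
  obtain ⟨C, hC⟩ := hbdd
  have hzf : Integrable (fun z ↦ z • f (y - s * z)) (gaussianReal 0 1) :=
    (integrable_id_gaussianReal 0 1).smul_bdd C hint.aestronglyMeasurable (ae_of_all _ fun z ↦ hC _)
  have hstein := stein_identity_gaussianReal (fun z ↦ hasDerivAt_comp_sub_mul (hf (y - s * z)))
    hint hint' (by simpa only [sub_zero] using hzf)
  simpa [integral_neg, integral_smul, gaussianSmoothing] using hstein

lemma hasDerivAt_gaussianSmoothing_param (hf : Differentiable ℝ f)
    (hf' : Differentiable ℝ (deriv f)) (hbdd : ∃ C, ∀ x, ‖f x‖ ≤ C)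
    (hbdd' : ∃ C, ∀ x, ‖deriv f x‖ ≤ C) (hbdd'' : ∃ C, ∀ x, ‖deriv (deriv f) x‖ ≤ C) (s y : ℝ) :
    HasDerivAt (fun s ↦ gaussianSmoothing f s y)
      (s • gaussianSmoothing (deriv (deriv f)) s y) s := by
  have hint (s : ℝ) : Integrable (fun z ↦ f (y - s * z)) (gaussianReal 0 1) :=
    integrable_comp_sub_mul hf.continuous.stronglyMeasurable hbdd s y
  have hmeas : AEStronglyMeasurable (fun z ↦ -(z • deriv f (y - s * z))) (gaussianReal 0 1) := by
    have := hf'.continuous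
    exact Continuous.aestronglyMeasurable (by fun_prop)
  have hderiv (z s : ℝ) : HasDerivAt (fun s ↦ f (y - s * z)) (-(z • deriv f (y - s * z))) s := by
    simpa only [mul_comm z] using hasDerivAt_comp_sub_mul (s := z) (z := s) (hf (y - z * s))
  rw [← neg_neg (s • _), ← integral_smul_comp_sub_mul_gaussianReal hf' hbdd' hbdd'' s y,
    ← integral_neg]
  obtain ⟨C, hC⟩ := hbdd'
  refine (hasDerivAt_integral_of_dominated_loc_of_deriv_le
    (F := fun s z ↦ f (y - s * z)) (F' := fun s z ↦ -(z • deriv f (y - s * z)))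
    (bound := fun z ↦ |z| * C) univ_mem
    (Eventually.of_forall fun s ↦ (hint s).aestronglyMeasurable) (hint s) hmeas
    (ae_of_all _ fun z s _ ↦ ?_) ((integrable_id_gaussianReal 0 1).abs.mul_const C)
    (ae_of_all _ fun z s _ ↦ hderiv z s)).2
  rw [norm_neg, norm_smul, Real.norm_eq_abs]
  gcongr
  exact hC _

end GaussianSmoothing

section BackwardTaylor

variable {E : Type*} [NormedAddCommGroup E] [NormedSpace ℝ E] {u : ℕ → ℝ → E} {K : ℕ}

/-- If `u l s` is the `l`-th derivative of a curve at time `s ^ 2 / 2`, this is the degree `K`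
Taylor polynomial of the curve centred at time `s ^ 2 / 2` and evaluated at time `0`. -/
noncomputable def backwardTaylorSum (u : ℕ → ℝ → E) (K : ℕ) (s : ℝ) : E :=
  ∑ l ∈ Finset.range (K + 1), ((-1 : ℝ) ^ l * (s ^ 2 / 2) ^ l / (l.factorial : ℝ)) • u l s

@[simp]
lemma backwardTaylorSum_zero (u : ℕ → ℝ → E) (K : ℕ) : backwardTaylorSum u K 0 = u 0 0 := by
  simp [backwardTaylorSum, Finset.sum_range_succ']

lemma backwardTaylorSum_comp_neg (u : ℕ → ℝ → E) (K : ℕ) (s : ℝ) :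
    backwardTaylorSum (fun l r ↦ u l (-r)) K s = backwardTaylorSum u K (-s) := by
  simp only [backwardTaylorSum, neg_sq]

lemma hasDerivAt_sq_div_two_pow_div_factorial (n : ℕ) (s : ℝ) :
    HasDerivAt (fun s : ℝ ↦ (s ^ 2 / 2) ^ (n + 1) / ((n + 1).factorial : ℝ))
      ((s ^ 2 / 2) ^ n / (n.factorial : ℝ) * s) s := by
  have hsq : HasDerivAt (fun s : ℝ ↦ s ^ 2 / 2) s s := by
    simpa using (hasDerivAt_pow 2 s).div_const 2
  convert! (hsq.pow (n + 1)).div_const ((n + 1).factorial : ℝ) using 1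
  rw [Nat.factorial_succ]
  push_cast
  field_simp

lemma hasDerivAt_backwardTaylorSum (hu : ∀ l ≤ K, ∀ s, HasDerivAt (u l) (s • u (l + 1) s) s)
    (s : ℝ) :
    HasDerivAt (backwardTaylorSum u K)
      (((-1 : ℝ) ^ K * ((s ^ 2 / 2) ^ K / (K.factorial : ℝ) * s)) • u (K + 1) s) s := by
  induction K with
  | zero =>
    have hsum : backwardTaylorSum u 0 = u 0 := by
      ext
      simp [backwardTaylorSum]
    simpa [hsum] using hu 0 le_rfl s
  | succ K ih =>
    have hsum : backwardTaylorSum u (K + 1) = fun s ↦ backwardTaylorSum u K s +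
        ((-1 : ℝ) ^ (K + 1) * ((s ^ 2 / 2) ^ (K + 1) / ((K + 1).factorial : ℝ))) • u (K + 1) s := by
      ext s
      simp only [backwardTaylorSum, Finset.sum_range_succ _ (K + 1), mul_div_assoc]
    have hlast := ((hasDerivAt_sq_div_two_pow_div_factorial K s).const_mul
      ((-1 : ℝ) ^ (K + 1))).smul (hu (K + 1) le_rfl s)
    rw [hsum]
    convert! (ih fun l hl ↦ hu l (by lia)).add hlast using 1
    module

lemma norm_sub_backwardTaylorSum_le {C : ℝ}
    (hu : ∀ l ≤ K, ∀ s, HasDerivAt (u l) (s • u (l + 1) s) s)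
    (hC : ∀ s, ‖u (K + 1) s‖ ≤ C) (s : ℝ) :
    ‖u 0 0 - backwardTaylorSum u K s‖ ≤ C * ((s ^ 2 / 2) ^ (K + 1) / ((K + 1).factorial : ℝ)) := by
  wlog hs : 0 ≤ s generalizing u s
  · have hreflect (l : ℕ) (hl : l ≤ K) (r : ℝ) :
        HasDerivAt (fun r ↦ u l (-r)) (r • u (l + 1) (-r)) r := by
      convert! (hu l hl (-r)).scomp r (hasDerivAt_neg r) using 1
      module
    simpa [backwardTaylorSum_comp_neg] using
      this hreflect (fun r ↦ hC (-r)) (-s) (by linarith)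
  have hderiv (r : ℝ) := (hasDerivAt_backwardTaylorSum hu r).const_sub (u 0 0)
  refine image_norm_le_of_norm_deriv_right_le_deriv_boundary
    (f := fun r ↦ u 0 0 - backwardTaylorSum u K r)
    (fun r _ ↦ (hderiv r).continuousAt.continuousWithinAt) (fun r _ ↦ (hderiv r).hasDerivWithinAt)
    (by simp) (fun r ↦ (hasDerivAt_sq_div_two_pow_div_factorial K r).const_mul C)
    (fun r hr ↦ ?_) (Set.right_mem_Icc.2 hs)
  have hr0 : 0 ≤ r := hr.1
  calc ‖-(((-1 : ℝ) ^ K * ((r ^ 2 / 2) ^ K / (K.factorial : ℝ) * r)) • u (K + 1) r)‖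
      = (r ^ 2 / 2) ^ K / (K.factorial : ℝ) * r * ‖u (K + 1) r‖ := by
        rw [norm_neg, norm_smul, norm_mul, norm_pow, norm_neg, norm_one, one_pow, one_mul,
          Real.norm_of_nonneg (by positivity)]
    _ ≤ (r ^ 2 / 2) ^ K / (K.factorial : ℝ) * r * C := by
        gcongr
        exact hC r
    _ = C * ((r ^ 2 / 2) ^ K / (K.factorial : ℝ) * r) := mul_comm _ _

end BackwardTaylor

lemma norm_sub_sum_iteratedDeriv_gaussianSmoothing_le {E : Type*} [NormedAddCommGroup E]
    [NormedSpace ℝ E] [CompleteSpace E] {f : ℝ → E} {K : ℕ} {L : ℝ}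
    (hf : ∀ k < 2 * K + 2, Differentiable ℝ (iteratedDeriv k f))
    (hbdd : ∀ k ≤ 2 * K + 2, ∃ C, ∀ x, ‖iteratedDeriv k f x‖ ≤ C)
    (hL : ∀ x, ‖iteratedDeriv (2 * K + 2) f x‖ ≤ L) (s y : ℝ) :
    ‖f y - ∑ l ∈ Finset.range (K + 1), ((-1 : ℝ) ^ l * (s ^ 2 / 2) ^ l / (l.factorial : ℝ)) •
        iteratedDeriv (2 * l) (gaussianSmoothing f s) y‖
      ≤ L * ((s ^ 2 / 2) ^ (K + 1) / ((K + 1).factorial : ℝ)) := by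
  let u (l : ℕ) (s : ℝ) : E := gaussianSmoothing (iteratedDeriv (2 * l) f) s y
  have hu (l : ℕ) (hl : l ≤ K) (s : ℝ) : HasDerivAt (u l) (s • u (l + 1) s) s := by
    have h₀ := hbdd (2 * l) (by lia)
    have h₁ := hbdd (2 * l + 1) (by lia)
    have h₂ := hbdd (2 * l + 1 + 1) (by lia)
    have hd₁ := hf (2 * l + 1) (by lia)
    simp only [u, Nat.mul_succ, iteratedDeriv_succ] at h₁ h₂ hd₁ ⊢
    exact hasDerivAt_gaussianSmoothing_param (hf (2 * l) (by lia)) hd₁ h₀ h₁ h₂ s y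
  have hsum : ∑ l ∈ Finset.range (K + 1), ((-1 : ℝ) ^ l * (s ^ 2 / 2) ^ l / (l.factorial : ℝ)) •
      iteratedDeriv (2 * l) (gaussianSmoothing f s) y = backwardTaylorSum u K s := by
    refine Finset.sum_congr rfl fun l hl ↦ ?_
    have hlK := Finset.mem_range.1 hl
    rw [iteratedDeriv_gaussianSmoothing (fun k hk ↦ hf k (by lia)) (fun k hk ↦ hbdd k (by lia))]
  have hu₀ : u 0 0 = f y := by simp [u]
  rw [hsum, ← hu₀]
  exact norm_sub_backwardTaylorSum_le hu (fun s ↦ norm_gaussianSmoothing_le hL s y) s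

lemma measureReal_map_add_Iic {Ω : Type*} [MeasurableSpace Ω] {P : Measure Ω} [IsFiniteMeasure P]
    {X W : Ω → ℝ} (hX : AEMeasurable X P) (hW : AEMeasurable W P) (hXW : IndepFun X W P) (x : ℝ) :
    (P.map (X + W)).real (Set.Iic x) = ∫ ω, (P.map X).real (Set.Iic (x - W ω)) ∂P := by
  have hmono : Monotone fun t ↦ P.map X (Set.Iic t) :=
    fun _ _ hst ↦ measure_mono (Set.Iic_subset_Iic.2 hst)
  have hmeas : Measurable fun w ↦ P.map X (Set.Iic (x - w)) :=
    hmono.measurable.comp (by fun_prop)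
  have hpre (w : ℝ) : (fun t ↦ (t, w)) ⁻¹' ((fun p : ℝ × ℝ ↦ p.1 + p.2) ⁻¹' Set.Iic x)
      = Set.Iic (x - w) := by
    ext t
    simp [le_sub_iff_add_le]
  simp only [measureReal_def]
  rw [integral_toReal (f := fun ω ↦ P.map X (Set.Iic (x - W ω)))
    (hmeas.comp_aemeasurable hW) (ae_of_all _ fun _ ↦ measure_lt_top _ _),
    hXW.map_add_eq_map_conv_map₀ hX hW, Measure.conv, Measure.map_apply measurable_add
    measurableSet_Iic, Measure.prod_apply_symm (measurable_add measurableSet_Iic)]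
  simp_rw [hpre]
  rw [lintegral_map' hmeas.aemeasurable hW]

lemma measureReal_map_add_const_mul_Iic_eq_gaussianSmoothing {Ω : Type*} [MeasurableSpace Ω]
    {P : Measure Ω} {X Z : Ω → ℝ} (hX : AEMeasurable X P) (hZ : HasLaw Z (gaussianReal 0 1) P)
    (hXZ : IndepFun X Z P) (σ x : ℝ) :
    (P.map fun ω ↦ X ω + σ * Z ω).real (Set.Iic x)
      = gaussianSmoothing (fun t ↦ (P.map X).real (Set.Iic t)) σ x := by
  have := hZ.isProbabilityMeasure
  have hmono : Monotone fun t ↦ (P.map X).real (Set.Iic t) :=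
    fun _ _ hst ↦ measureReal_mono (Set.Iic_subset_Iic.2 hst)
  have hmeas : Measurable fun z ↦ (P.map X).real (Set.Iic (x - σ * z)) :=
    hmono.measurable.comp (by fun_prop)
  exact (measureReal_map_add_Iic hX (hZ.aemeasurable.const_mul σ)
    (hXZ.comp measurable_id (measurable_const_mul σ)) x).trans
    (hZ.integral_comp hmeas.aestronglyMeasurable)

theorem F_in_G_finite_term_general {Ω : Type*} [MeasurableSpace Ω] {P : Measure Ω}
    {X Z : Ω → ℝ} (hX : AEMeasurable X P) (hZ : HasLaw Z (gaussianReal 0 1) P)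
    (hXZ : IndepFun X Z P) {σ η : ℝ} (hη : η = σ ^ 2 / 2)
    {Y : Ω → ℝ} (hY : ∀ ω, Y ω = X ω + σ * Z ω) {F G : ℝ → ℝ}
    (hF : ∀ x, F x = (P.map X).real (Set.Iic x)) (hG : ∀ x, G x = (P.map Y).real (Set.Iic x))
    {K : ℕ} (hdiff : ∀ k < 2 * K + 2, Differentiable ℝ (iteratedDeriv k F))
    (hbdd : ∀ k ≤ 2 * K + 2, ∃ C, ∀ x, |iteratedDeriv k F x| ≤ C) {L : ℝ}
    (hL : ∀ x, |iteratedDeriv (2 * K + 2) F x| ≤ L) (y : ℝ) :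
    |F y - ∑ l ∈ Finset.range (K + 1),
        (-1 : ℝ) ^ l * η ^ l / (l.factorial : ℝ) * iteratedDeriv (2 * l) G y|
      ≤ L / ((K + 1).factorial : ℝ) * η ^ (K + 1) := by
  obtain rfl : Y = fun ω ↦ X ω + σ * Z ω := funext hY
  have hGF : G = gaussianSmoothing F σ := by
    ext x
    rw [hG, measureReal_map_add_const_mul_Iic_eq_gaussianSmoothing hX hZ hXZ, ← funext hF]
  rw [hGF, hη, div_mul_comm, mul_comm]
  exact norm_sub_sum_iteratedDeriv_gaussianSmoothing_le hdiff hbdd hL σ y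

/-- **Finite-order expansion of `F` in terms of even derivatives of `G`.**
Fix `K ≥ 0` and `L > 0`.  There is a constant `C` depending only on `K` and `L` such that,
in the additive Gaussian model `Y = X + σZ` with `0 < η = σ²/2 ≤ 1/2` and cdfs `F, G` of
`X, Y`, if `F` is `(2K+2)`-times continuously differentiable with `sup_ℝ |F^{(k)}| ≤ L` for
all `k ≤ 2K+2`, then for all `y`,
`|F(y) − Σ_{l=0}^K (−1)^l (η^l/l!) G^{(2l)}(y)| ≤ C η^{K+1}`. -/
theorem F_in_G_finite_term
    (K : ℕ) (L : ℝ) (hL : 0 < L) :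
    ∃ C : ℝ,
      ∀ (Ω : Type) [MeasureSpace Ω] [IsProbabilityMeasure (ℙ : Measure Ω)]
        (X Z : Ω → ℝ), Measurable X → Measurable Z →
        Measure.map Z ℙ = gaussianReal 0 1 → IndepFun X Z ℙ →
        ∀ σ η : ℝ, 0 < η → η ≤ 1 / 2 → η = σ ^ 2 / 2 →
        ∀ Y : Ω → ℝ, (∀ ω, Y ω = X ω + σ * Z ω) →
        ∀ F G : ℝ → ℝ,
          (∀ x, F x = (Measure.map X ℙ (Set.Iic x)).toReal) →
          (∀ x, G x = (Measure.map Y ℙ (Set.Iic x)).toReal) →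
          ContDiff ℝ (2 * K + 2) F →
          (∀ k ≤ 2 * K + 2, ∀ x : ℝ, |iteratedDeriv k F x| ≤ L) →
        ∀ y : ℝ,
          |F y - ∑ l ∈ Finset.range (K + 1),
              (-1 : ℝ) ^ l * η ^ l / (l.factorial : ℝ) * iteratedDeriv (2 * l) G y|
            ≤ C * η ^ (K + 1) :=
  ⟨L / ((K + 1).factorial : ℝ), fun _ _ _ _ _ hX hZ hlaw hXZ _ _ _ _ hη _ hY _ _ hF hG hFK hbdd ↦
    F_in_G_finite_term_general hX.aemeasurable ⟨hZ.aemeasurable, hlaw⟩ hXZ hη hY hF hG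
      (fun k hk ↦ hFK.differentiable_iteratedDeriv k (by exact_mod_cast hk))
      (fun k hk ↦ ⟨L, hbdd k hk⟩) (hbdd _ le_rfl)⟩
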